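/- arXiv:1206.0213 — 2 statements merged into one kernel-verified Lean document; each statement's English description precedes it below -/
import Mathlib

section
/- Let M be a connected surface, X ⊂ M a closed subset, and Γ a loop in M \ X. Then Γ is null-homotopic in M \ X if and only if for every finite subset Z ⊂ X, the loop Γ is null-homotopic in M \ Z. -/
/-- A loop `γ` (a continuous map on `[0,1]` with equal endpoints) is null-homotopic
within the subset `S`: it is homotopic, through loops contained in `S`, to a
constant loop. -/
def NullHomotopicIn {M : Type*} [TopologicalSpace M]
    (γ : C(unitInterval, M)) (S : Set M) : Prop :=
  ∃ H : C(unitInterval × unitInterval, M),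
    (∀ t, H (0, t) = γ t) ∧
    (∃ c, ∀ t, H (1, t) = c) ∧
    (∀ s, H (s, 0) = H (s, 1)) ∧
    (∀ p, H p ∈ S)

/-!
Let `F` be the image of the loop and `U` the component of `M \ X` containing it. A homotopy in
`M \ Z` has compact image `K`, so it suffices to find a continuous map `K → U` that is the
identity on `F`. On a compact neighbourhood `L ⊆ U` of `F`, and on the components of `M \ F`
contained in `U`, take the identity. Any other component of `M \ F` meeting `K` meets `X`, hence
crosses the compact frontier of `L`; there are finitely many of these, and `Z` consists of one
point of `X` in each.

On such a component the map is extended disc by disc. Over a punctured coordinate disc, a map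
given outside the disc extends by radial projection onto the boundary circle, since partial maps
from closed subsets of a circle into the path-connected surface `U` extend to the whole circle.
The puncture can then be moved along the component, through a chain of overlapping discs, until
it reaches the point of `Z`, which `K` avoids.
-/

open Set Metric Topology

section Extensors

variable {X X' Y : Type*} [TopologicalSpace X] [TopologicalSpace X'] [TopologicalSpace Y]

/-- `Y` is an extensor for the space `X`: partial maps into `Y` defined on closed subsets of `X`
extend to all of `X`. A partial map is encoded as a total function that is continuous on its
domain `T`; its values off `T` are irrelevant. -/
def IsExtensorFor (Y X : Type*) [TopologicalSpace Y] [TopologicalSpace X] : Prop :=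
  ∀ ⦃T : Set X⦄ ⦃f : X → Y⦄, IsClosed T → ContinuousOn f T → ∃ g : C(X, Y), EqOn g f T

theorem IsExtensorFor.of_homeomorph (h : IsExtensorFor Y X) (e : X ≃ₜ X') :
    IsExtensorFor Y X' := by
  intro T f hT hf
  obtain ⟨g, hg⟩ := h (hT.preimage e.continuous)
    (hf.comp e.continuous.continuousOn (mapsTo_preimage e T))
  refine ⟨g.comp e.symm, fun x hx => ?_⟩
  have hx' : e.symm x ∈ e ⁻¹' T := by simpa using hx
  simpa using hg hx'

theorem exists_continuousMap_eqOn_of_tietzeExtension.{u} {X : Type u} [TopologicalSpace X]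
    [NormalSpace X] {S : Set X} (hS : IsClosed S) {f : X → Y} (hf : ContinuousOn f S)
    {W : Set Y} (hfW : MapsTo f S W) (hW : TietzeExtension.{u} W) :
    ∃ g : C(X, Y), EqOn g f S := by
  obtain ⟨g, -, hg⟩ := ContinuousMap.exists_forall_mem_restrict_eq hS ⟨_, hf.domRestrict⟩
    (fun x => hfW x.2)
  exact ⟨g, fun x hx => DFunLike.congr_fun hg ⟨x, hx⟩⟩

/-- Every point of `Y` has a neighbourhood with the Tietze extension property, a local form of
being an absolute extensor. Universe level `0` suffices to extend maps defined on subsets of `ℝ`. -/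
def LocallyTietze (Y : Type*) [TopologicalSpace Y] : Prop :=
  ∀ y : Y, ∃ W ∈ 𝓝 y, TietzeExtension.{0} W

theorem LocallyTietze.exists_isOpen_mapsTo (hY : LocallyTietze Y) {T : Set X}
    (hT : IsClosed T) {f : X → Y} (hf : ContinuousOn f T) (x : X) :
    ∃ O, IsOpen O ∧ x ∈ O ∧ ∃ W : Set Y, TietzeExtension.{0} W ∧ MapsTo f (T ∩ O) W := by
  obtain ⟨W, hW, hWT⟩ := hY (f x)
  have hev : ∀ᶠ t in 𝓝 x, t ∈ T → f t ∈ W := by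
    by_cases hx : x ∈ T
    · exact eventually_nhdsWithin_iff.1 (hf x hx hW)
    · filter_upwards [hT.isOpen_compl.mem_nhds hx] with t ht htT using absurd htT ht
  obtain ⟨O, hO, hOo, hxO⟩ := eventually_nhds_iff.1 hev
  exact ⟨O, hOo, hxO, W, hWT, fun t ht => hO t ht.2 ht.1⟩

theorem locallyTietze_of_chartedSpace (E : Type*) [NormedAddCommGroup E] [NormedSpace ℝ E]
    [FiniteDimensional ℝ E] [ChartedSpace E Y] : LocallyTietze Y := by
  intro y
  let e := chartAt E y
  obtain ⟨r, hr, hrt⟩ := nhds_basis_closedBall.mem_iff.1 (chart_target_mem_nhds E y)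
  have hsource : e.symm '' closedBall (e y) r ⊆ e.source :=
    image_subset_iff.2 fun v hv => e.map_target (hrt hv)
  refine ⟨e.symm '' closedBall (e y) r, ?_, ?_⟩
  · simpa [e] using e.symm.image_mem_nhds (mem_chart_target E y) (closedBall_mem_nhds _ hr)
  · have := instTietzeExtensionClosedBall ℝ (e y) hr
    exact .of_homeo
      (e.homeomorphOfImageSubsetSource hsource (e.image_symm_image_of_subset_target hrt))

end Extensors

section Circle

variable {Y : Type*} [TopologicalSpace Y] {T : Set ℝ} {f : ℝ → Y} {a b c : ℝ}

/-- The partial map `f` with domain `T ⊆ ℝ` extends over `[a, b]` with any prescribed initial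
value that is compatible with `f`. Leaving the final value free makes such extensions
composable. -/
def ExtendsFromLeft (f : ℝ → Y) (T : Set ℝ) (a b : ℝ) : Prop :=
  ∀ y, (a ∈ T → f a = y) → ∃ g : C(ℝ, Y), g a = y ∧ EqOn g f (T ∩ Icc a b)

theorem ExtendsFromLeft.trans (hab : a ≤ b) (h₁ : ExtendsFromLeft f T a b)
    (h₂ : ExtendsFromLeft f T b c) : ExtendsFromLeft f T a c := by
  intro y hy
  obtain ⟨g, hga, hgf⟩ := h₁ y hy
  obtain ⟨g', hgb, hgf'⟩ := h₂ (g b) fun hb => (hgf ⟨hb, hab, le_rfl⟩).symm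
  have hcont : Continuous fun t => if t ≤ b then g t else g' t :=
    g.continuous.if_le g'.continuous continuous_id continuous_const fun t ht => by rw [ht, hgb]
  refine ⟨⟨_, hcont⟩, by simp [hab, hga], fun t ⟨htT, hat, htc⟩ => ?_⟩
  by_cases htb : t ≤ b
  · simpa [htb] using hgf ⟨htT, hat, htb⟩
  · simpa [htb] using hgf' ⟨htT, (not_le.1 htb).le, htc⟩

theorem extendsFromLeft_of_inter_subset_singleton [PathConnectedSpace Y]
    (hT : T ∩ Icc a b ⊆ {b}) : ExtendsFromLeft f T a b := by
  intro y hy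
  rcases lt_or_ge a b with hab | hba
  · let γ := PathConnectedSpace.somePath y (f b)
    refine ⟨⟨fun t => γ.extend ((t - a) / (b - a)), γ.continuous_extend.comp (by fun_prop)⟩,
      by simp, fun t ht => ?_⟩
    obtain rfl : t = b := hT ht
    simp [div_self (sub_pos.2 hab).ne']
  · refine ⟨.const ℝ y, rfl, fun t ht => ?_⟩
    obtain rfl : t = a := le_antisymm (ht.2.2.trans hba) ht.2.1
    exact (hy ht.1).symm

theorem extendsFromLeft_of_mapsTo_of_mem (hT : IsClosed T) (hf : ContinuousOn f T) {W : Set Y}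
    (hW : TietzeExtension.{0} W) (hfW : MapsTo f (T ∩ Icc a b) W) (ha : a ∈ T) (hab : a ≤ b) :
    ExtendsFromLeft f T a b := by
  intro y hy
  obtain ⟨g, hg⟩ := exists_continuousMap_eqOn_of_tietzeExtension (hT.inter isClosed_Icc)
    (hf.mono inter_subset_left) hfW hW
  exact ⟨g, (hg ⟨ha, le_rfl, hab⟩).trans (hy ha), hg⟩

theorem extendsFromLeft_of_mapsTo [PathConnectedSpace Y] (hT : IsClosed T)
    (hf : ContinuousOn f T) {W : Set Y} (hW : TietzeExtension.{0} W)
    (hfW : MapsTo f (T ∩ Icc a b) W) : ExtendsFromLeft f T a b := by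
  rcases (T ∩ Icc a b).eq_empty_or_nonempty with hempty | hne
  · exact extendsFromLeft_of_inter_subset_singleton (hempty ▸ empty_subset _)
  obtain ⟨m, ⟨hmT, ham, hmb⟩, hmin⟩ := (isCompact_Icc.inter_left hT).exists_isLeast hne
  have hleft : ExtendsFromLeft f T a m := extendsFromLeft_of_inter_subset_singleton
    fun t ht => le_antisymm ht.2.2 (hmin ⟨ht.1, ht.2.1, ht.2.2.trans hmb⟩)
  have hright : ExtendsFromLeft f T m b := extendsFromLeft_of_mapsTo_of_mem hT hf hW
    (hfW.mono_left (inter_subset_inter_right T (Icc_subset_Icc_left ham))) hmT hmb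
  exact hleft.trans ham hright

theorem LocallyTietze.extendsFromLeft [PathConnectedSpace Y] (hY : LocallyTietze Y)
    (hT : IsClosed T) (hf : ContinuousOn f T) (hab : a ≤ b) : ExtendsFromLeft f T a b := by
  choose O hO hxO W hW hfW using hY.exists_isOpen_mapsTo hT hf
  obtain ⟨t, ht₀, -, ⟨n, hn⟩, htO⟩ := exists_monotone_Icc_subset_open_cover_Icc hab
    (c := fun x => ((↑) : Icc a b → ℝ) ⁻¹' O x)
    (fun x => (hO x).preimage continuous_subtype_val) fun s _ => mem_iUnion.2 ⟨s, hxO s⟩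
  have hstep : ∀ m, ExtendsFromLeft f T (t m) (t (m + 1)) := by
    intro m
    obtain ⟨x, hx⟩ := htO m
    refine extendsFromLeft_of_mapsTo hT hf (hW x) fun s ⟨hsT, hs⟩ => hfW x ⟨hsT, ?_⟩
    exact hx (a := ⟨s, (t m).2.1.trans hs.1, hs.2.trans (t (m + 1)).2.2⟩) hs
  have hsteps : ∀ m, ExtendsFromLeft f T a (t (m + 1)) := by
    intro m
    induction m with
    | zero => simpa only [ht₀] using hstep 0
    | succ m ih => exact ih.trans (t (m + 1)).2.1 (hstep (m + 1))
  exact hn (n + 1) n.le_succ ▸ hsteps n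

theorem isExtensorFor_addCircle [PathConnectedSpace Y] (hY : LocallyTietze Y)
    (p : ℝ) [hp : Fact (0 < p)] : IsExtensorFor Y (AddCircle p) := by
  intro T f hT hf
  -- Once `0` lies in the domain, the extension over `[0, p]` takes the value `f 0` at both ends.
  wlog h0 : (0 : AddCircle p) ∈ T generalizing T
  · obtain ⟨g, hg⟩ := this (hT.union isClosed_singleton)
      (hf.union_of_isClosed (continuousOn_singleton f 0) hT isClosed_singleton) (.inr rfl)
    exact ⟨g, hg.mono subset_union_left⟩
  have hmk : Continuous ((↑) : ℝ → AddCircle p) := AddCircle.continuous_mk' p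
  obtain ⟨g, hg₀, hgf⟩ := hY.extendsFromLeft (hT.preimage hmk)
    (hf.comp hmk.continuousOn (mapsTo_preimage _ T)) hp.out.le (f 0) fun _ => by simp
  have hpT : (p : AddCircle p) ∈ T := by rwa [AddCircle.coe_period]
  have hgp : g p = f 0 :=
    (hgf ⟨hpT, hp.out.le, le_rfl⟩).trans (congrArg f (AddCircle.coe_period p))
  refine ⟨⟨AddCircle.liftIco p 0 g, AddCircle.liftIco_zero_continuous (hg₀.trans hgp.symm)
    g.continuous.continuousOn⟩, fun x hx => ?_⟩
  obtain ⟨t, ht, rfl⟩ := AddCircle.eq_coe_Ico x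
  exact (AddCircle.liftIco_zero_coe_apply ht).trans (hgf ⟨hx, ht.1, ht.2.le⟩)

theorem isExtensorFor_euclidean_unit_circle [PathConnectedSpace Y] (hY : LocallyTietze Y) :
    IsExtensorFor Y (sphere (0 : EuclideanSpace ℝ (Fin 2)) 1) := by
  let e : Circle ≃ₜ sphere (0 : EuclideanSpace ℝ (Fin 2)) 1 :=
    Complex.orthonormalBasisOneI.repr.toHomeomorph.subtype fun z => by
      simp [Submonoid.unitSphere]
  have : Fact (0 < 2 * Real.pi) := ⟨Real.two_pi_pos⟩
  exact (isExtensorFor_addCircle hY _).of_homeomorph (AddCircle.homeomorphCircle'.trans e)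

end Circle

section Pushing

variable {E : Type*} [NormedAddCommGroup E] [NormedSpace ℝ E]
  {Y : Type*} [TopologicalSpace Y]

theorem IsExtensorFor.exists_continuousOn_compl_center
    (hY : IsExtensorFor Y (sphere (0 : E) 1)) {c : E} {r : ℝ} (hr : 0 < r) {T : Set E}
    (hT : IsClosed T) (hTr : T ⊆ sphere c r) {f : E → Y} (hf : ContinuousOn f T) :
    ∃ g : E → Y, ContinuousOn g {c}ᶜ ∧ EqOn g f T := by
  let σ : sphere (0 : E) 1 → E := fun u => c + r • (u : E)
  have hσ : Continuous σ := by fun_prop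
  obtain ⟨h, hh⟩ := hY (hT.preimage hσ) (hf.comp hσ.continuousOn (mapsTo_preimage σ T))
  let dir : ({0}ᶜ : Set E) → sphere (0 : E) 1 := fun x => (homeomorphUnitSphereProd E x).1
  have hne {z : E} (hz : z ≠ c) : z - c ∈ ({0}ᶜ : Set E) := sub_ne_zero.2 hz
  classical
  let g : E → Y := fun z => if hz : z ≠ c then h (dir ⟨z - c, hne hz⟩) else f z
  have hg {z : E} (hz : z ≠ c) : g z = h (dir ⟨z - c, hne hz⟩) := dif_pos hz
  refine ⟨g, ?_, fun z hz => ?_⟩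
  · rw [continuousOn_iff_continuous_domRestrict]
    have hcont : Continuous fun z : ({c}ᶜ : Set E) => h (dir ⟨z - c, hne z.2⟩) := by fun_prop
    exact hcont.congr fun z => (hg z.2).symm
  · have hzr : ‖z - c‖ = r := mem_sphere_iff_norm.1 (hTr hz)
    have hzc : z ≠ c := ne_of_mem_sphere (hTr hz) hr.ne'
    have hσz : σ (dir ⟨z - c, hne hzc⟩) = z := by
      simp [σ, dir, hzr, smul_inv_smul₀ hr.ne']
    rw [hg hzc, hh (by rwa [mem_preimage, hσz])]
    exact congrArg f hσz

variable {M : Type*} [TopologicalSpace M] {φ : M → Y} {F S S' K T : Set M}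

/-- Some map agreeing with `φ` on `F` is defined and continuous on a closed set containing `F`
and `S`. As for `IsExtensorFor`, partial maps are total functions with irrelevant values off
their domain, which here is the smallest possible closed set. -/
def ExtendsOver (φ : M → Y) (F S : Set M) : Prop :=
  ∃ f : M → Y, ContinuousOn f (closure (F ∪ S)) ∧ EqOn f φ F

theorem ExtendsOver.mono (h : ExtendsOver φ F S) (hS : S' ⊆ S) : ExtendsOver φ F S' :=
  let ⟨f, hf, hfφ⟩ := h
  ⟨f, hf.mono (closure_mono (union_subset_union_right F hS)), hfφ⟩

/-- `φ` extends over the complement in `S` of every neighbourhood of `p`. The extensions for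
different neighbourhoods need not be compatible. -/
def ExtendsOff (φ : M → Y) (F S : Set M) (p : M) : Prop :=
  ∀ O ∈ 𝓝 p, ExtendsOver φ F (S \ O)

theorem ExtendsOff.mono {p : M} (h : ExtendsOff φ F S p) (hS : S' ⊆ S) : ExtendsOff φ F S' p :=
  fun O hO => (h O hO).mono (sdiff_subset_sdiff_left hS)

theorem exists_continuousOn_union_of_isClosed {A D : Set M} (hA : IsClosed A) (hD : IsClosed D)
    {f g : M → Y} (hf : ContinuousOn f A) (hg : ContinuousOn g D) (hfg : EqOn f g (A ∩ D)) :
    ∃ f' : M → Y, ContinuousOn f' (A ∪ D) ∧ EqOn f' f A := by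
  classical
  have heq : EqOn (D.piecewise g f) f A := by
    intro x hxA
    by_cases hxD : x ∈ D
    · exact (piecewise_eq_of_mem _ _ _ hxD).trans (hfg ⟨hxA, hxD⟩).symm
    · exact piecewise_eq_of_notMem _ _ _ hxD
  exact ⟨D.piecewise g f,
    (hf.congr heq).union_of_isClosed (hg.congr (piecewise_eqOn D g f)) hA hD, heq⟩

theorem exists_continuousOn_chart_closedBall_diff_center
    (hY : IsExtensorFor Y (sphere (0 : E) 1)) (e : OpenPartialHomeomorph M E) {c : E} {r : ℝ}
    (hr : 0 < r) (hball : closedBall c r ⊆ e.target) {A : Set M} (hA : IsClosed A) {f : M → Y}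
    (hf : ContinuousOn f A) :
    ∃ g : M → Y, ContinuousOn g (e.symm '' closedBall c r \ {e.symm c}) ∧
      EqOn g f (A ∩ e.symm '' sphere c r) := by
  have hsphere : sphere c r ⊆ e.target := sphere_subset_closedBall.trans hball
  have hsymm : ContinuousOn e.symm (sphere c r) := e.continuousOn_symm.mono hsphere
  obtain ⟨g, hg, hgf⟩ := hY.exists_continuousOn_compl_center hr
    (hsymm.preimage_isClosed_of_isClosed isClosed_sphere hA) inter_subset_left
    (hf.comp (hsymm.mono inter_subset_left) fun v hv => hv.2)
  refine ⟨g ∘ e, hg.comp (e.continuousOn.mono ?_) ?_, ?_⟩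
  · rintro _ ⟨⟨v, hv, rfl⟩, -⟩
    exact e.map_target (hball hv)
  · rintro _ ⟨⟨v, hv, rfl⟩, hvc⟩
    rw [e.right_inv (hball hv)]
    exact fun hv' => hvc (congrArg e.symm hv')
  · rintro _ ⟨hvA, v, hv, rfl⟩
    simpa [e.right_inv (hsphere hv)] using hgf ⟨hv, hvA⟩

theorem ExtendsOver.extendsOff_chart_center [ProperSpace E] [T2Space M]
    (hY : IsExtensorFor Y (sphere (0 : E) 1)) (e : OpenPartialHomeomorph M E) {c : E} {r : ℝ}
    (hr : 0 < r) (hball : closedBall c r ⊆ e.target)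
    (hF : Disjoint F (e.symm '' closedBall c r))
    (h : ExtendsOver φ F (S \ e.symm '' ball c r)) :
    ExtendsOff φ F (S ∪ e.symm '' ball c r) (e.symm c) := by
  intro O hO
  obtain ⟨f, hf, hfφ⟩ := h
  set B := e.symm '' ball c r with hBdef
  set A := closure (F ∪ S \ B)
  set β := e.symm '' closedBall c r with hβdef
  have hβ : IsClosed β :=
    ((isCompact_closedBall c r).image_of_continuousOn (e.continuousOn_symm.mono hball)).isClosed
  have hB : IsOpen B :=
    e.isOpen_image_symm_of_subset_target isOpen_ball (ball_subset_closedBall.trans hball)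
  have hBβ : B ⊆ β := image_mono ball_subset_closedBall
  have hβB : β ⊆ B ∪ e.symm '' sphere c r := by
    rw [hβdef, hBdef, ← image_union, ball_union_sphere]
  obtain ⟨g, hg, hgf⟩ :=
    exists_continuousOn_chart_closedBall_diff_center hY e hr hball isClosed_closure hf
  have hcO : e.symm c ∈ interior O := mem_interior_iff_mem_nhds.2 hO
  have hAB : IsClosed (A \ B) := isClosed_closure.sdiff hB
  have hβO : IsClosed (β \ interior O) := hβ.sdiff isOpen_interior
  obtain ⟨f', hf', hf'f⟩ := exists_continuousOn_union_of_isClosed hAB hβO (hf.mono sdiff_subset)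
    (hg.mono (sdiff_subset_sdiff_right (singleton_subset_iff.2 hcO)))
    fun x ⟨⟨hxA, hxB⟩, hxβ, _⟩ => (hgf ⟨hxA, (hβB hxβ).resolve_left hxB⟩).symm
  have hFAB : F ⊆ A \ B := fun x hx =>
    ⟨subset_closure (.inl hx), fun hxB => disjoint_left.1 hF hx (hBβ hxB)⟩
  have hsub : F ∪ (S ∪ B) \ O ⊆ (A \ B) ∪ (β \ interior O) := by
    refine union_subset (hFAB.trans subset_union_left) fun x ⟨hx, hxO⟩ => ?_
    by_cases hxB : x ∈ B
    · exact .inr ⟨hBβ hxB, fun hxi => hxO (interior_subset hxi)⟩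
    · exact .inl ⟨subset_closure (.inr ⟨hx.resolve_right hxB, hxB⟩), hxB⟩
  exact ⟨f', hf'.mono (closure_minimal hsub (hAB.union hβO)), (hf'f.mono hFAB).trans hfφ⟩

variable [ProperSpace E] [T2Space M] [ChartedSpace E M]

theorem exists_nhds_extendsOff_of_extendsOff (hY : IsExtensorFor Y (sphere (0 : E) 1))
    (hF : IsClosed F) {x : M} (hx : x ∉ F) :
    ∃ W ∈ 𝓝 x, ∀ p ∈ W, ∀ q ∈ W, ∀ S, ExtendsOff φ F S p → ExtendsOff φ F (S ∪ W) q := by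
  let e := chartAt E x
  have hxe : x ∈ e.source := mem_chart_source E x
  have hopen : IsOpen (e.target ∩ e.symm ⁻¹' Fᶜ) :=
    e.continuousOn_symm.isOpen_inter_preimage e.open_target hF.isOpen_compl
  obtain ⟨r, hr, hball⟩ := Metric.isOpen_iff.1 hopen (e x)
    ⟨e.map_source hxe, by simpa [e.left_inv hxe] using hx⟩
  have htarget : ball (e x) r ⊆ e.target := fun v hv => (hball hv).1
  have hthird : ball (e x) (r / 3) ⊆ e.target := (ball_subset_ball (by linarith)).trans htarget
  refine ⟨e.symm '' ball (e x) (r / 3), ?_, ?_⟩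
  · exact (e.isOpen_image_symm_of_subset_target isOpen_ball hthird).mem_nhds
      ⟨e x, mem_ball_self (by linarith), e.left_inv hxe⟩
  rintro _ ⟨p, hp, rfl⟩ _ ⟨q, hq, rfl⟩ S hS
  rw [mem_ball] at hq
  have hinner : ball (e x) (r / 3) ⊆ ball q (2 * r / 3) :=
    ball_subset_ball' (by linarith [dist_comm q (e x)])
  have houter : closedBall q (2 * r / 3) ⊆ ball (e x) r :=
    closedBall_subset_ball' (by linarith)
  have hclosed : closedBall q (2 * r / 3) ⊆ e.target := houter.trans htarget
  have hdisj : Disjoint F (e.symm '' closedBall q (2 * r / 3)) :=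
    (disjoint_left.2 fun x hx hxF => by
      obtain ⟨v, hv, rfl⟩ := hx
      exact (hball (houter hv)).2 hxF).symm
  have hnhds : e.symm '' ball q (2 * r / 3) ∈ 𝓝 (e.symm p) :=
    (e.isOpen_image_symm_of_subset_target isOpen_ball
      (ball_subset_closedBall.trans hclosed)).mem_nhds (mem_image_of_mem _ (hinner hp))
  exact ((hS _ hnhds).extendsOff_chart_center hY e (by linarith) hclosed hdisj).mono
    (union_subset_union_right S (image_mono hinner))

theorem ExtendsOff.of_mem_connectedComponentIn (hY : IsExtensorFor Y (sphere (0 : E) 1))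
    (hF : IsClosed F) {p q : M} (hp : p ∉ F) (hq : q ∈ connectedComponentIn Fᶜ p)
    (h : ExtendsOff φ F S p) : ExtendsOff φ F S q := by
  refine isPreconnected_connectedComponentIn.induction₂'
    (fun p q => ExtendsOff φ F S p → ExtendsOff φ F S q) (fun x hx => ?_)
    (fun x y z _ _ _ hxy hyz hS => hyz (hxy hS)) (mem_connectedComponentIn hp) hq h
  obtain ⟨W, hW, hmove⟩ := exists_nhds_extendsOff_of_extendsOff (φ := φ) hY hF
    (connectedComponentIn_subset _ _ hx)
  have hxW : x ∈ W := mem_of_mem_nhds hW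
  filter_upwards [mem_nhdsWithin_of_mem_nhds hW] with y hyW
  exact ⟨fun hS => (hmove x hxW y hyW S hS).mono subset_union_left,
    fun hS => (hmove y hyW x hxW S hS).mono subset_union_left⟩

theorem exists_nhds_extendsOver_union_inter (hY : IsExtensorFor Y (sphere (0 : E) 1))
    (hF : IsClosed F) (hK : IsClosed K) {x : M} (hx : x ∉ F)
    (hxK : ¬ connectedComponentIn Fᶜ x ⊆ K) :
    ∃ W ∈ 𝓝 x, ∀ S, ExtendsOver φ F S → ExtendsOver φ F ((S ∪ W) ∩ K) := by
  obtain ⟨z, hz, hzK⟩ := not_subset.1 hxK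
  obtain ⟨W, hW, hmove⟩ := exists_nhds_extendsOff_of_extendsOff (φ := φ) hY hF hx
  have hxW : x ∈ W := mem_of_mem_nhds hW
  refine ⟨W, hW, fun S hS => ?_⟩
  have hoff : ExtendsOff φ F (S ∪ W) x :=
    hmove x hxW x hxW S fun O _ => hS.mono sdiff_subset
  have hover := hoff.of_mem_connectedComponentIn hY hF hx hz Kᶜ (hK.isOpen_compl.mem_nhds hzK)
  rwa [sdiff_compl] at hover

theorem ExtendsOver.union_inter_of_isCompact (hY : IsExtensorFor Y (sphere (0 : E) 1))
    (hF : IsClosed F) (hK : IsClosed K) (hT : IsCompact T)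
    (hTF : ∀ x ∈ T, x ∉ F ∧ ¬ connectedComponentIn Fᶜ x ⊆ K) (h : ExtendsOver φ F S) :
    ExtendsOver φ F ((S ∪ T) ∩ K) := by
  have hT' : ∀ S, ExtendsOver φ F S → ExtendsOver φ F ((S ∪ T) ∩ K) := by
    refine hT.induction_on (p := fun T => ∀ S, ExtendsOver φ F S → ExtendsOver φ F ((S ∪ T) ∩ K))
      ?empty ?mono ?union ?nhds
    case empty => exact fun S hS => hS.mono (by simp)
    case mono =>
      exact fun s t hst ht S hS =>
        (ht S hS).mono (inter_subset_inter_left K (union_subset_union_right S hst))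
    case union => exact fun s t hs ht S hS => (ht _ (hs S hS)).mono fun x hx => by grind
    case nhds =>
      intro x hx
      obtain ⟨W, hW, hSW⟩ :=
        exists_nhds_extendsOver_union_inter (φ := φ) hY hF hK (hTF x hx).1 (hTF x hx).2
      exact ⟨W, mem_nhdsWithin_of_mem_nhds hW, hSW⟩
  exact hT' S h

theorem ExtendsOver.of_subset_interior (hY : IsExtensorFor Y (sphere (0 : E) 1))
    (hF : IsClosed F) (hFS : F ⊆ interior S) (hK : IsCompact K)
    (hKF : ∀ x ∈ K \ interior S, ¬ connectedComponentIn Fᶜ x ⊆ K) (h : ExtendsOver φ F S) :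
    ExtendsOver φ F K := by
  refine (h.union_inter_of_isCompact hY hF hK.isClosed (hK.diff isOpen_interior)
    fun x hx => ⟨fun hxF => hx.2 (hFS hxF), hKF x hx⟩).mono fun x hx => ⟨?_, hx⟩
  by_cases hxS : x ∈ interior S
  · exact .inl (interior_subset hxS)
  · exact .inr ⟨hx, hxS⟩

end Pushing

section Components

variable {M : Type*} [TopologicalSpace M] {C F K O Q S V X : Set M} {x : M}

theorem inter_frontier_nonempty_of_isPreconnected (hC : IsPreconnected C)
    (hCS : (C ∩ S).Nonempty) (hCS' : (C \ S).Nonempty) : (C ∩ frontier S).Nonempty := by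
  by_contra hfr
  have hclosure : C ∩ closure S ⊆ interior S := fun y ⟨hyC, hyS⟩ =>
    not_not.1 fun hyi => hfr ⟨y, hyC, hyS, hyi⟩
  have hint : (C ∩ interior S).Nonempty :=
    hCS.mono fun y hy => ⟨hy.1, hclosure ⟨hy.1, subset_closure hy.2⟩⟩
  have hsub : C ⊆ interior S := hC.subset_of_closure_inter_subset isOpen_interior hint
    fun y hy => hclosure ⟨hy.2, closure_mono interior_subset hy.1⟩
  obtain ⟨y, hyC, hyS⟩ := hCS'
  exact hyS (interior_subset (hsub hyC))

theorem closure_connectedComponentIn_diff_nonempty [LocallyConnectedSpace M] (hO : IsOpen O)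
    (hK : IsPreconnected K) (hxK : x ∈ K) (hxO : x ∈ O) (hKO : (K \ O).Nonempty) :
    (closure (connectedComponentIn O x) \ O).Nonempty := by
  by_contra hclosure
  rw [not_nonempty_iff_eq_empty, sdiff_eq_empty] at hclosure
  have hxC : x ∈ connectedComponentIn O x := mem_connectedComponentIn hxO
  have hclosed : closure (connectedComponentIn O x) ⊆ connectedComponentIn O x :=
    isPreconnected_connectedComponentIn.closure.subset_connectedComponentIn
      (subset_closure hxC) hclosure
  have hKC : K ⊆ connectedComponentIn O x := hK.subset_of_closure_inter_subset
    hO.connectedComponentIn ⟨x, hxK, hxC⟩ (inter_subset_left.trans hclosed)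
  obtain ⟨y, hyK, hyO⟩ := hKO
  exact hyO (connectedComponentIn_subset O x (hKC hyK))

theorem connectedComponentIn_inter_nonempty_of_compl_subset [LocallyConnectedSpace M]
    (hO : IsOpen O) (hK : IsPreconnected K) (hxK : x ∈ K) (hxO : x ∈ O) (hKO : (K \ O).Nonempty)
    (hV : IsOpen V) (hOV : Oᶜ ⊆ V) : (connectedComponentIn O x ∩ V).Nonempty := by
  obtain ⟨y, hy, hyO⟩ := closure_connectedComponentIn_diff_nonempty hO hK hxK hxO hKO
  rw [inter_comm]
  exact mem_closure_iff.1 hy V hV (hOV hyO)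

theorem isOpen_setOf_connectedComponentIn [LocallyConnectedSpace M] (hO : IsOpen O)
    (P : Set M → Prop) : IsOpen {x | x ∈ O ∧ P (connectedComponentIn O x)} := by
  rw [isOpen_iff_mem_nhds]
  rintro x ⟨hxO, hPx⟩
  filter_upwards [hO.connectedComponentIn.mem_nhds (mem_connectedComponentIn hxO)] with y hy
  exact ⟨connectedComponentIn_subset O x hy, connectedComponentIn_eq hy ▸ hPx⟩

theorem exists_finite_subset_meeting_connectedComponentIn [LocallyConnectedSpace M]
    (hO : IsOpen O) (hQ : IsCompact Q) (hQO : Q ⊆ O) (X : Set M) :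
    ∃ Z ⊆ X, Z.Finite ∧ ∀ x, (connectedComponentIn O x ∩ Q).Nonempty →
      (connectedComponentIn O x ∩ X).Nonempty → (connectedComponentIn O x ∩ Z).Nonempty := by
  obtain ⟨t, -, ht⟩ := hQ.elim_nhds_subcover (connectedComponentIn O)
    fun q hq => hO.connectedComponentIn.mem_nhds (mem_connectedComponentIn (hQO hq))
  let D : Set M := {q ∈ (t : Set M) | (connectedComponentIn O q ∩ X).Nonempty}
  choose! z hz using fun (q : M) (hq : q ∈ D) => hq.2
  refine ⟨z '' D, image_subset_iff.2 fun q hq => (hz q hq).2,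
    (t.finite_toSet.sep _).image z, fun x ⟨w, hwx, hwQ⟩ hxX => ?_⟩
  obtain ⟨q, hqt, hwq⟩ := mem_iUnion₂.1 (ht hwQ)
  rw [connectedComponentIn_eq hwx, ← connectedComponentIn_eq hwq] at hxX ⊢
  have hqD : q ∈ D := ⟨hqt, hxX⟩
  exact ⟨z q, (hz q hqD).1, mem_image_of_mem z hqD⟩

theorem isClosed_union_setOf_connectedComponentIn_compl [LocallyConnectedSpace M]
    (hF : IsClosed F) (P : Set M → Prop) :
    IsClosed (F ∪ {x | x ∈ Fᶜ ∧ P (connectedComponentIn Fᶜ x)}) := by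
  have hcompl : F ∪ {x | x ∈ Fᶜ ∧ P (connectedComponentIn Fᶜ x)} =
      {x | x ∈ Fᶜ ∧ ¬ P (connectedComponentIn Fᶜ x)}ᶜ := by
    ext x
    simp only [mem_union, mem_ofPred_eq, mem_compl_iff]
    tauto
  rw [hcompl]
  exact (isOpen_setOf_connectedComponentIn hF.isOpen_compl (¬ P ·)).isClosed_compl

theorem subset_connectedComponentIn_of_inter_nonempty (hC : IsPreconnected C) (hCO : C ⊆ O)
    (h : (C ∩ connectedComponentIn O x).Nonempty) : C ⊆ connectedComponentIn O x := by
  obtain ⟨y, hyC, hyx⟩ := h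
  rw [connectedComponentIn_eq hyx]
  exact hC.subset_connectedComponentIn hyC hCO

theorem exists_isClosed_exists_finite_meeting_connectedComponentIn [T2Space M]
    [LocallyCompactSpace M] [LocallyConnectedSpace M] (hX : IsClosed X) (hF : IsCompact F)
    (hFne : F.Nonempty) (hFX : F ⊆ connectedComponentIn Xᶜ x) :
    ∃ S, IsClosed S ∧ F ⊆ interior S ∧ S ⊆ connectedComponentIn Xᶜ x ∧ ∃ Z ⊆ X, Z.Finite ∧
      ∀ K, IsPreconnected K → F ⊆ K → ∀ y ∈ K \ interior S,
        (connectedComponentIn Fᶜ y ∩ Z).Nonempty := by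
  set U := connectedComponentIn Xᶜ x
  have hU : IsOpen U := hX.isOpen_compl.connectedComponentIn
  have hFo : IsOpen Fᶜ := hF.isClosed.isOpen_compl
  obtain ⟨L, hL, hFL, hLU⟩ := exists_compact_between hF hU hFX
  obtain ⟨Z, hZX, hZ, hmeet⟩ := exists_finite_subset_meeting_connectedComponentIn hFo
    (hL.of_isClosed_subset isClosed_frontier hL.isClosed.frontier_subset)
    (fun y hy hyF => hy.2 (hFL hyF)) X
  let G : Set M := {y | y ∈ Fᶜ ∧ connectedComponentIn Fᶜ y ⊆ U}
  have hG : IsOpen G := isOpen_setOf_connectedComponentIn hFo (· ⊆ U)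
  have hLG : IsClosed (L ∪ G) := by
    rw [← union_eq_self_of_subset_right (hFL.trans interior_subset), union_assoc]
    exact hL.isClosed.union
      (isClosed_union_setOf_connectedComponentIn_compl hF.isClosed (· ⊆ U))
  have hGU : G ⊆ U := fun y hy => hy.2 (mem_connectedComponentIn hy.1)
  refine ⟨L ∪ G, hLG, hFL.trans (interior_mono subset_union_left), union_subset hLU hGU,
    Z, hZX, hZ, fun K hK hFK y ⟨hyK, hyLG⟩ => ?_⟩
  have hyF : y ∉ F := fun hy => hyLG (interior_mono subset_union_left (hFL hy))
  have hyG : y ∉ G := fun hy => hyLG (interior_maximal subset_union_right hG hy)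
  have hmeetV {V : Set M} (hV : IsOpen V) (hFV : F ⊆ V) :
      (connectedComponentIn Fᶜ y ∩ V).Nonempty :=
    connectedComponentIn_inter_nonempty_of_compl_subset hFo hK hyK hyF
      (hFne.mono fun w hw => ⟨hFK hw, not_not.2 hw⟩) hV (by rwa [compl_compl])
  have hmeetX : (connectedComponentIn Fᶜ y ∩ X).Nonempty := by
    by_contra hCX
    exact hyG ⟨hyF, subset_connectedComponentIn_of_inter_nonempty
      isPreconnected_connectedComponentIn (fun w hwC hwX => hCX ⟨w, hwC, hwX⟩) (hmeetV hU hFX)⟩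
  have hmeetL : (connectedComponentIn Fᶜ y ∩ L).Nonempty :=
    (hmeetV isOpen_interior hFL).mono (inter_subset_inter_right _ interior_subset)
  exact hmeet y (inter_frontier_nonempty_of_isPreconnected isPreconnected_connectedComponentIn
    hmeetL (hmeetX.mono fun w hw => ⟨hw.1, fun hwL =>
      connectedComponentIn_subset _ _ (hLU hwL) hw.2⟩)) hmeetX

end Components

section Surfaces

variable {M : Type*} [TopologicalSpace M]

theorem exists_continuousOn_retraction_to_subtype {U : Set M} (hU : U.Nonempty) :
    ∃ r : M → U, ContinuousOn r U ∧ ∀ x ∈ U, (r x : M) = x := by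
  have : Nonempty U := hU.to_subtype
  let r : M → U := Function.invFun Subtype.val
  have hr : ∀ x ∈ U, (r x : M) = x := fun x hx => Function.invFun_eq ⟨⟨x, hx⟩, rfl⟩
  exact ⟨r, IsInducing.subtypeVal.continuousOn_iff.2 (continuousOn_id.congr hr), hr⟩

theorem exists_finite_forall_exists_continuousOn_mapsTo_compl [T2Space M]
    [ChartedSpace (EuclideanSpace ℝ (Fin 2)) M] {X F : Set M} (hX : IsClosed X)
    (hF : IsCompact F) (hFconn : IsConnected F) (hFX : F ⊆ Xᶜ) :
    ∃ Z ⊆ X, Z.Finite ∧ ∀ K, IsCompact K → IsPreconnected K → F ⊆ K → Disjoint K Z →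
      ∃ f : M → M, ContinuousOn f K ∧ MapsTo f K Xᶜ ∧ EqOn f id F := by
  have := ChartedSpace.locallyCompactSpace (EuclideanSpace ℝ (Fin 2)) M
  have := ChartedSpace.locallyConnectedSpace (EuclideanSpace ℝ (Fin 2)) M
  have := ChartedSpace.locallyPathConnectedSpace (EuclideanSpace ℝ (Fin 2)) M
  obtain ⟨x₀, hx₀⟩ := hFconn.nonempty
  let U : TopologicalSpace.Opens M :=
    ⟨connectedComponentIn Xᶜ x₀, hX.isOpen_compl.connectedComponentIn⟩
  have hx₀U : x₀ ∈ U := mem_connectedComponentIn (hFX hx₀)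
  have : PathConnectedSpace U := isPathConnected_iff_pathConnectedSpace.1 <|
    U.isOpen.isConnected_iff_isPathConnected.1 (isConnected_connectedComponentIn_iff.2 (hFX hx₀))
  have hext : IsExtensorFor U (sphere (0 : EuclideanSpace ℝ (Fin 2)) 1) :=
    isExtensorFor_euclidean_unit_circle (locallyTietze_of_chartedSpace (EuclideanSpace ℝ (Fin 2)))
  obtain ⟨S, hS, hFS, hSU, Z, hZX, hZ, hmeet⟩ :=
    exists_isClosed_exists_finite_meeting_connectedComponentIn hX hF ⟨x₀, hx₀⟩
      (hFconn.isPreconnected.subset_connectedComponentIn hx₀ hFX)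
  refine ⟨Z, hZX, hZ, fun K hK hKconn hFK hKZ => ?_⟩
  obtain ⟨r, hr, hrU⟩ := exists_continuousOn_retraction_to_subtype ⟨x₀, hx₀U⟩
  have hrS : ExtendsOver r F S := by
    have hclosure : closure (F ∪ S) ⊆ S :=
      closure_minimal (union_subset (hFS.trans interior_subset) Subset.rfl) hS
    exact ⟨r, hr.mono (hclosure.trans hSU), eqOn_refl r F⟩
  obtain ⟨f, hf, hfr⟩ := hrS.of_subset_interior hext hF.isClosed hFS hK fun x hx hxK => by
    obtain ⟨z, hzx, hzZ⟩ := hmeet K hKconn hFK x hx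
    exact disjoint_left.1 hKZ (hxK hzx) hzZ
  refine ⟨fun x => f x, ?_, fun x _ => connectedComponentIn_subset _ _ (f x).2, fun x hx => ?_⟩
  · exact continuous_subtype_val.comp_continuousOn
      (hf.mono (subset_union_right.trans subset_closure))
  · exact (congrArg Subtype.val (hfr hx)).trans (hrU x (hSU (interior_subset (hFS hx))))

variable {γ : C(unitInterval, M)} {S S' : Set M}

theorem NullHomotopicIn.mono (h : NullHomotopicIn γ S) (hS : S ⊆ S') : NullHomotopicIn γ S' :=
  let ⟨H, h₀, h₁, hloop, hH⟩ := h
  ⟨H, h₀, h₁, hloop, fun p => hS (hH p)⟩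

end Surfaces

theorem nullhomotopic_iff_nullhomotopic_in_finite_complements_general
    {M : Type*} [TopologicalSpace M] [T2Space M] [ChartedSpace (EuclideanSpace ℝ (Fin 2)) M]
    {X : Set M} (hX : IsClosed X) {p : M} (Γ : Path p p) (hΓ : ∀ t, Γ t ∈ Xᶜ) :
    NullHomotopicIn (Γ : C(unitInterval, M)) Xᶜ ↔
      ∀ Z : Set M, Z ⊆ X → Z.Finite → NullHomotopicIn (Γ : C(unitInterval, M)) Zᶜ := by
  refine ⟨fun h Z hZX _ => h.mono (compl_subset_compl.2 hZX), fun h => ?_⟩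
  obtain ⟨Z, hZX, hZ, hcompress⟩ := exists_finite_forall_exists_continuousOn_mapsTo_compl hX
    (isCompact_range Γ.continuous) (isConnected_range Γ.continuous) (range_subset_iff.2 hΓ)
  obtain ⟨H, h₀, ⟨c, h₁⟩, hloop, hHZ⟩ := h Z hZX hZ
  obtain ⟨f, hf, hfX, hfΓ⟩ := hcompress (range H) (isCompact_range H.continuous)
    (isPreconnected_range H.continuous) (range_subset_iff.2 fun t => ⟨(0, t), h₀ t⟩)
    (disjoint_left.2 <| forall_mem_range.2 hHZ)
  refine ⟨⟨f ∘ H, hf.comp_continuous H.continuous mem_range_self⟩, fun t => ?_,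
    ⟨f c, fun t => congrArg f (h₁ t)⟩, fun s => congrArg f (hloop s),
    fun q => hfX (mem_range_self q)⟩
  exact (congrArg f (h₀ t)).trans (hfΓ (mem_range_self t))

/-- A loop Γ in M \ X (X closed) is null-homotopic in M \ X iff it is
null-homotopic in M \ Z for every finite subset Z ⊆ X. -/
theorem nullhomotopic_iff_nullhomotopic_in_finite_complements
    {M : Type*} [TopologicalSpace M]
    [T2Space M] [SecondCountableTopology M] [ConnectedSpace M]
    [ChartedSpace (EuclideanSpace ℝ (Fin 2)) M]
    (X : Set M) (hX : IsClosed X)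
    (Γ : C(unitInterval, M)) (hloop : Γ 0 = Γ 1) (hΓ : ∀ t, Γ t ∈ Xᶜ) :
    NullHomotopicIn Γ Xᶜ ↔
      ∀ Z : Set M, Z ⊆ X → Z.Finite → NullHomotopicIn Γ Zᶜ :=
  nullhomotopic_iff_nullhomotopic_in_finite_complements_general hX ⟨Γ, rfl, hloop.symm⟩ hΓ
end

section
/- Let F be a homeomorphism of a surface M isotopic to the identity, X ⊂ Fix(F) closed, and I an isotopy on N_X = M \ X from id to F|_{N_X}. Let y ∈ Fix(F) \ X be such that the trajectory loop I(y) is null-homotopic in N_X. Then there exists an isotopy I' on N_X from id to F|_{N_X} with F'_t(y) = y for all t, such that I' is homotopic to I relative to the complement of a compact subset of N_X. -/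
/-!
Inside a chart, a point can be pushed to a nearby one by a translation cut off outside a compact
set, and this push depends continuously on both points. Patching such pushes with a partition of
unity on a compact parameter space, every homotopy `φ (s, t)` of points lifts to compactly supported
homeomorphisms `Φ (s, t)` with `Φ (0, t) = 1` and `Φ (s, t) (φ (0, t)) = φ (s, t)`, and for a
homotopy of loops one can achieve `Φ (s, 0) = Φ (s, 1)`. If `φ` contracts the trajectory of `y`
under `I`, then `(Φ (s, 0))⁻¹ * Φ (s, t) * I t` deforms `I`, with fixed endpoints, into an isotopy
along which `y` does not move.
-/

open Set Topology Filter Metric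
open scoped NNReal Interval

section Families

variable {P Q N : Type*} [TopologicalSpace P] [TopologicalSpace Q] [TopologicalSpace N]

variable (P N) in
/-- Families of self-homeomorphisms of `N` parametrised by `P` which, together with their inverses,
are jointly continuous. With `P = unitInterval` these are the isotopies of `N`. -/
def continuousFamilies : Subgroup (P → N ≃ₜ N) where
  carrier := {Φ | Continuous (fun q : P × N => Φ q.1 q.2) ∧
    Continuous (fun q : P × N => (Φ q.1).symm q.2)}
  mul_mem' := fun hΦ hΨ =>
    ⟨hΦ.1.comp (continuous_fst.prodMk hΨ.1), hΨ.2.comp (continuous_fst.prodMk hΦ.2)⟩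
  one_mem' := ⟨continuous_snd, continuous_snd⟩
  inv_mem' := fun hΦ => ⟨hΦ.2, hΦ.1⟩

variable (P N) in
/-- Continuous families of homeomorphisms supported in one compact set, uniformly in the
parameter. -/
def compactlySupportedFamilies : Subgroup (P → N ≃ₜ N) where
  carrier := {Φ | Φ ∈ continuousFamilies P N ∧ ∃ K, IsCompact K ∧ ∀ p, ∀ x ∉ K, Φ p x = x}
  mul_mem' := by
    rintro Φ Ψ ⟨hΦ, K, hK, hΦK⟩ ⟨hΨ, L, hL, hΨL⟩
    refine ⟨mul_mem hΦ hΨ, K ∪ L, hK.union hL, fun p x hx => ?_⟩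
    rw [mem_union, not_or] at hx
    rw [Pi.mul_apply, Homeomorph.mul_apply, hΨL p x hx.2, hΦK p x hx.1]
  one_mem' := ⟨one_mem _, ∅, isCompact_empty, fun _ _ _ => rfl⟩
  inv_mem' := by
    rintro Φ ⟨hΦ, K, hK, hΦK⟩
    exact ⟨inv_mem hΦ, K, hK, fun p x hx => (Φ p).symm_apply_eq.2 (hΦK p x hx).symm⟩

theorem comp_mem_continuousFamilies {Φ : P → N ≃ₜ N} (hΦ : Φ ∈ continuousFamilies P N)
    {a : Q → P} (ha : Continuous a) : Φ ∘ a ∈ continuousFamilies Q N :=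
  ⟨hΦ.1.comp (ha.prodMap continuous_id), hΦ.2.comp (ha.prodMap continuous_id)⟩

theorem comp_mem_compactlySupportedFamilies {Φ : P → N ≃ₜ N}
    (hΦ : Φ ∈ compactlySupportedFamilies P N) {a : Q → P} (ha : Continuous a) :
    Φ ∘ a ∈ compactlySupportedFamilies Q N :=
  let ⟨hcont, K, hK, hΦK⟩ := hΦ
  ⟨comp_mem_continuousFamilies hcont ha, K, hK, fun q => hΦK (a q)⟩

theorem mem_continuousFamilies_of_locally {Φ : P → N ≃ₜ N}
    (h : ∀ p, ∃ U : Set P, IsOpen U ∧ p ∈ U ∧ Φ ∘ ((↑) : U → P) ∈ continuousFamilies U N) :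
    Φ ∈ continuousFamilies P N := by
  constructor <;>
  · refine continuous_iff_continuousAt.2 fun ⟨p, x⟩ => ?_
    obtain ⟨U, hU, hp, hΦ⟩ := h p
    have hemb := hU.isOpenEmbedding_subtypeVal.prodMap (IsOpenEmbedding.id (X := N))
    refine (hemb.continuousAt_iff (x := (⟨p, hp⟩, x))).1 ?_
    first | exact hΦ.1.continuousAt | exact hΦ.2.continuousAt

theorem exists_compactlySupportedFamily_extending {J C : Set P} (hJ : IsOpen J) (hC : IsClosed C)
    (hCJ : C ⊆ J) {Φ : J → N ≃ₜ N} (hΦ : Φ ∈ compactlySupportedFamilies J N)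
    (hΦC : ∀ p : J, (p : P) ∉ C → Φ p = 1) :
    ∃ Ψ ∈ compactlySupportedFamilies P N, (∀ p : J, Ψ p = Φ p) ∧ ∀ p ∉ C, Ψ p = 1 := by
  classical
  obtain ⟨hcont, K, hK, hΦK⟩ := hΦ
  let Ψ (p : P) : N ≃ₜ N := if hp : p ∈ J then Φ ⟨p, hp⟩ else 1
  have hΨJ (p : J) : Ψ p = Φ p := dif_pos p.2
  have hΨC (p : P) (hp : p ∉ C) : Ψ p = 1 := by
    by_cases hpJ : p ∈ J
    · rw [hΨJ ⟨p, hpJ⟩, hΦC _ hp]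
    · exact dif_neg hpJ
  have hΨ : Ψ ∈ continuousFamilies P N := by
    refine mem_continuousFamilies_of_locally fun p => ?_
    by_cases hp : p ∈ C
    · have hres : Ψ ∘ ((↑) : J → P) = Φ := funext hΨJ
      exact ⟨J, hJ, hCJ hp, hres ▸ hcont⟩
    · have hres : Ψ ∘ ((↑) : ↥Cᶜ → P) = 1 := funext fun q => hΨC q q.2
      exact ⟨Cᶜ, hC.isOpen_compl, hp, hres ▸ one_mem _⟩
  refine ⟨Ψ, ⟨hΨ, K, hK, fun p x hx => ?_⟩, hΨJ, hΨC⟩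
  by_cases hp : p ∈ J
  · rw [hΨJ ⟨p, hp⟩, hΦK _ x hx]
  · rw [hΨC p fun h => hp (hCJ h), Homeomorph.one_apply]

theorem isCompact_setOf_exists_apply_mem [CompactSpace P] {Φ : P → N ≃ₜ N}
    (hΦ : Φ ∈ continuousFamilies P N) {K : Set N} (hK : IsCompact K) :
    IsCompact {x | ∃ p, Φ p x ∈ K} := by
  have himage : {x | ∃ p, Φ p x ∈ K} =
      (fun q : P × N => (Φ q.1).symm q.2) '' (univ ×ˢ K) := by
    ext x
    constructor
    · rintro ⟨p, hp⟩
      exact ⟨(p, Φ p x), ⟨mem_univ p, hp⟩, (Φ p).symm_apply_apply x⟩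
    · rintro ⟨⟨p, z⟩, ⟨-, hz⟩, rfl⟩
      exact ⟨p, ((Φ p).apply_symm_apply z).symm ▸ hz⟩
  rw [himage]
  exact (isCompact_univ.prod hK).image hΦ.2

theorem mem_continuousFamilies_of_antilipschitzWith {N : Type*} [PseudoMetricSpace N] {K : ℝ≥0}
    {Φ : P → N ≃ₜ N} (hΦ : Continuous fun q : P × N => Φ q.1 q.2)
    (hK : ∀ p, AntilipschitzWith K (Φ p)) : Φ ∈ continuousFamilies P N := by
  refine ⟨hΦ, continuous_iff_continuousAt.2 fun ⟨p, z⟩ => ?_⟩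
  have hbound (q : P × N) : dist ((Φ q.1).symm q.2) ((Φ p).symm z) ≤
      K * dist q.2 (Φ q.1 ((Φ p).symm z)) := by
    simpa using (hK q.1).le_mul_dist ((Φ q.1).symm q.2) ((Φ p).symm z)
  have hlim : Continuous fun q : P × N => K * dist q.2 (Φ q.1 ((Φ p).symm z)) :=
    continuous_const.mul (continuous_snd.dist (hΦ.comp (continuous_fst.prodMk continuous_const)))
  refine tendsto_iff_dist_tendsto_zero.2 (squeeze_zero (fun _ => dist_nonneg) hbound ?_)
  simpa using hlim.tendsto (p, z)

variable (P N) in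
/-- The orbit relation of `compactlySupportedFamilies P N` acting pointwise on maps `P → N`. -/
def compactlySupportedOrbitRel : Setoid (P → N) where
  r α β := ∃ Φ ∈ compactlySupportedFamilies P N, ∀ p, Φ p (α p) = β p
  iseqv :=
    { refl := fun _ => ⟨1, one_mem _, fun _ => rfl⟩
      symm := fun ⟨Φ, hΦ, hαβ⟩ =>
        ⟨Φ⁻¹, inv_mem hΦ, fun p => (Φ p).symm_apply_eq.2 (hαβ p).symm⟩
      trans := fun ⟨Φ, hΦ, hαβ⟩ ⟨Ψ, hΨ, hβγ⟩ =>
        ⟨Ψ * Φ, mul_mem hΨ hΦ, fun p => (congrArg (Ψ p) (hαβ p)).trans (hβγ p)⟩ }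

end Families

section LipschitzPerturbation

variable {E : Type*} [NormedAddCommGroup E] {K : ℝ≥0} {g : E → E}

theorem antilipschitzWith_id_add (hg : LipschitzWith K g) (hK : K < 1) :
    AntilipschitzWith (1 - K)⁻¹ (fun x => x + g x) := by
  simpa using AntilipschitzWith.id.add_lipschitzWith hg (by simpa using hK)

theorem surjective_id_add [CompleteSpace E] (hg : LipschitzWith K g) (hK : K < 1) :
    Function.Surjective (fun x => x + g x) := by
  intro z
  have hcontr : ContractingWith K (fun x => z - g x) :=
    ⟨hK, by simpa using (LipschitzWith.const z).sub hg⟩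
  exact ⟨hcontr.fixedPoint, add_eq_of_eq_sub hcontr.fixedPoint_isFixedPt.symm⟩

theorem isHomeomorph_id_add [CompleteSpace E] (hg : LipschitzWith K g) (hK : K < 1) :
    IsHomeomorph (fun x => x + g x) :=
  isHomeomorph_iff_isEmbedding_surjective.2
    ⟨(antilipschitzWith_id_add hg hK).isEmbedding (continuous_id.add hg.continuous),
      surjective_id_add hg hK⟩

variable [NormedSpace ℝ E]

theorem lipschitzWith_thickenedIndicator_smul {δ : ℝ} (hδ : 0 < δ) (A : Set E) {v : E}
    (hv : ‖v‖ ≤ δ / 2) : LipschitzWith 2⁻¹ fun x => (thickenedIndicator hδ A x : ℝ) • v := by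
  refine LipschitzWith.of_dist_le_mul fun x y => ?_
  have hcutoff : ‖(thickenedIndicator hδ A x : ℝ) - thickenedIndicator hδ A y‖ ≤
      δ⁻¹ * dist x y := by
    simpa [hδ.le, NNReal.dist_eq] using (lipschitzWith_thickenedIndicator hδ A).dist_le_mul x y
  rw [dist_eq_norm, ← sub_smul, norm_smul]
  calc _ ≤ (δ⁻¹ * dist x y) * (δ / 2) := by gcongr
    _ = (2⁻¹ : ℝ≥0) * dist x y := by push_cast; field_simp

theorem exists_continuousFamily_thickenedIndicator_translation [CompleteSpace E] {P : Type*}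
    [TopologicalSpace P] {δ : ℝ} (hδ : 0 < δ) (A : Set E) {V : P → E} (hV : Continuous V)
    (hVδ : ∀ p, ‖V p‖ ≤ δ / 2) :
    ∃ Φ ∈ continuousFamilies P E, ∀ p x, Φ p x = x + (thickenedIndicator hδ A x : ℝ) • V p := by
  have hlip p := lipschitzWith_thickenedIndicator_smul hδ A (hVδ p)
  have hhalf : (2⁻¹ : ℝ≥0) < 1 := inv_lt_one_of_one_lt₀ one_lt_two
  refine ⟨fun p => (isHomeomorph_id_add (hlip p) hhalf).homeomorph,
    mem_continuousFamilies_of_antilipschitzWith ?_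
      fun p => antilipschitzWith_id_add (hlip p) hhalf, fun _ _ => rfl⟩
  change Continuous fun q : P × E => q.2 + (thickenedIndicator hδ A q.2 : ℝ) • V q.1
  fun_prop

end LipschitzPerturbation

section ChartConjugation

variable {P N E : Type*} [TopologicalSpace P] [TopologicalSpace N] [TopologicalSpace E]
  (e : OpenPartialHomeomorph N E) {B : Set E}

open Classical in
/-- The conjugate of `f : E → E` by the chart `e`, extended by the identity outside the domain of
`e`. -/
noncomputable def chartConj (f : E → E) (x : N) : N :=
  if x ∈ e.source then e.symm (f (e x)) else x

variable {e}

theorem chartConj_of_mem {x : N} (hx : x ∈ e.source) (f : E → E) :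
    chartConj e f x = e.symm (f (e x)) :=
  if_pos hx

theorem chartConj_of_notMem {x : N} (hx : x ∉ e.source) (f : E → E) : chartConj e f x = x :=
  if_neg hx

theorem chartConj_of_apply_eq {x : N} {f : E → E} (hf : f (e x) = e x) : chartConj e f x = x := by
  by_cases hx : x ∈ e.source
  · rw [chartConj_of_mem hx, hf, e.left_inv hx]
  · exact chartConj_of_notMem hx f

theorem chartConj_of_notMem_image {f : E → E} (hf : ∀ z ∉ B, f z = z) {x : N}
    (hx : x ∉ e.symm '' B) : chartConj e f x = x := by
  by_cases hxs : x ∈ e.source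
  · exact chartConj_of_apply_eq (hf _ fun hB => hx ⟨e x, hB, e.left_inv hxs⟩)
  · exact chartConj_of_notMem hxs f

theorem leftInverse_chartConj {f g : E → E} (hgf : Function.LeftInverse g f)
    (hf : MapsTo f e.target e.target) :
    Function.LeftInverse (chartConj e g) (chartConj e f) := by
  intro x
  by_cases hx : x ∈ e.source
  · have hfx := hf (e.map_source hx)
    rw [chartConj_of_mem hx, chartConj_of_mem (e.map_target hfx), e.right_inv hfx, hgf,
      e.left_inv hx]
  · rw [chartConj_of_notMem hx, chartConj_of_notMem hx]

theorem continuous_chartConj [T2Space N] (hB : IsCompact B) (hBe : B ⊆ e.target) {f : P → E → E}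
    (hf : Continuous fun q : P × E => f q.1 q.2) (hfB : ∀ p, ∀ x ∉ B, f p x = x)
    (hfe : ∀ p, MapsTo (f p) e.target e.target) :
    Continuous fun q : P × N => chartConj e (f q.1) q.2 := by
  refine continuous_iff_continuousAt.2 fun ⟨p, x⟩ => ?_
  by_cases hx : x ∈ e.source
  · have hfex : ContinuousAt (fun q : P × N => f q.1 (e q.2)) (p, x) :=
      hf.continuousAt.comp (continuousAt_fst.prodMk ((e.continuousAt hx).comp continuousAt_snd))
    have hconj : ContinuousAt (fun q : P × N => e.symm (f q.1 (e q.2))) (p, x) :=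
      ContinuousAt.comp' (e.symm.continuousAt (hfe p (e.map_source hx))) hfex
    refine hconj.congr ?_
    filter_upwards [continuousAt_snd.eventually (e.open_source.mem_nhds hx)] with q hq
    exact (chartConj_of_mem hq _).symm
  · have hclosed : IsClosed (e.symm '' B) :=
      (hB.image_of_continuousOn (e.continuousOn_symm.mono hBe)).isClosed
    have hxB : x ∉ e.symm '' B := fun ⟨_, hb, hbx⟩ => hx (hbx ▸ e.map_target (hBe hb))
    refine (continuousAt_snd (p := (p, x))).congr ?_
    filter_upwards [continuousAt_snd.eventually (hclosed.isOpen_compl.mem_nhds hxB)] with q hq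
    exact (chartConj_of_notMem_image (hfB q.1) hq).symm

theorem mapsTo_of_forall_notMem_apply_eq {α : Type*} {f : α → α} (hf : Function.Injective f)
    {s t : Set α} (hst : s ⊆ t) (hfs : ∀ x ∉ s, f x = x) : MapsTo f t t := by
  intro x hx
  by_contra hfx
  exact hfx ((hf (hfs _ fun h => hfx (hst h))).symm ▸ hx)

theorem exists_compactlySupportedFamily_chartConj [T2Space N] (hB : IsCompact B)
    (hBe : B ⊆ e.target) {Φ : P → E ≃ₜ E} (hΦ : Φ ∈ continuousFamilies P E)
    (hΦB : ∀ p, ∀ x ∉ B, Φ p x = x) :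
    ∃ Ψ ∈ compactlySupportedFamilies P N, ∀ p x, Ψ p x = chartConj e (Φ p) x := by
  have hΦB' (p) : ∀ x ∉ B, (Φ p).symm x = x := fun x hx =>
    (Φ p).symm_apply_eq.2 (hΦB p x hx).symm
  have hmaps p := mapsTo_of_forall_notMem_apply_eq (Φ p).injective hBe (hΦB p)
  have hmaps' p := mapsTo_of_forall_notMem_apply_eq (Φ p).symm.injective hBe (hΦB' p)
  have hcont := continuous_chartConj hB hBe hΦ.1 hΦB hmaps
  have hcont' := continuous_chartConj hB hBe hΦ.2 hΦB' hmaps'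
  let Ψ (p : P) : N ≃ₜ N :=
    { toFun := chartConj e (Φ p)
      invFun := chartConj e (Φ p).symm
      left_inv := leftInverse_chartConj (Φ p).left_inv (hmaps p)
      right_inv := leftInverse_chartConj (Φ p).right_inv (hmaps' p)
      continuous_toFun := hcont.comp (continuous_const.prodMk continuous_id)
      continuous_invFun := hcont'.comp (continuous_const.prodMk continuous_id) }
  exact ⟨Ψ, ⟨⟨hcont, hcont'⟩, e.symm '' B,
    hB.image_of_continuousOn (e.continuousOn_symm.mono hBe),
    fun p _ hx => chartConj_of_notMem_image (hΦB p) hx⟩, fun _ _ => rfl⟩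

end ChartConjugation

section Pushable

variable {P N : Type*} [TopologicalSpace P] [TopologicalSpace N]

/-- A set `D` is pushable if any point `a` of `D` can be moved to any point `b` of `D` by a
homeomorphism which depends continuously on `(a, b)`, has support in a fixed compact set, and is
the identity when `a = b`: the evaluation map of the group of homeomorphisms has a section
over `D`. -/
def IsPushable (D : Set N) : Prop :=
  ∃ Φ ∈ compactlySupportedFamilies (D × D) N, (∀ a b, Φ (a, b) a = b) ∧ ∀ a, Φ (a, a) = 1

theorem isPushable_source_inter_preimage_ball [T2Space N] {E : Type*} [NormedAddCommGroup E]
    [NormedSpace ℝ E] [ProperSpace E] {e : OpenPartialHomeomorph N E} {c : E} {r : ℝ} (hr : 0 < r)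
    (hball : closedBall c (5 * r) ⊆ e.target) : IsPushable (e.source ∩ e ⁻¹' ball c r) := by
  set D := e.source ∩ e ⁻¹' ball c r
  let V : D × D → E := fun q => e q.2 - e q.1
  have he : Continuous fun a : D => e a :=
    continuousOn_iff_continuous_domRestrict.1 (e.continuousOn.mono inter_subset_left)
  have hV : Continuous V := (he.comp continuous_snd).sub (he.comp continuous_fst)
  have hVr (q : D × D) : ‖V q‖ ≤ 4 * r / 2 := by
    have hq := dist_triangle_right (e q.2) (e q.1) c
    rw [← dist_eq_norm]
    linarith [mem_ball.1 q.1.2.2, mem_ball.1 q.2.2.2]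
  have hr' : 0 < 4 * r := by positivity
  obtain ⟨Φ, hΦ, hΦV⟩ :=
    exists_continuousFamily_thickenedIndicator_translation hr' (ball c r) hV hVr
  have hthick : thickening (4 * r) (ball c r) ⊆ closedBall c (5 * r) :=
    (Metric.thickening_ball c (4 * r) r).trans (ball_subset_closedBall.trans_eq (by ring_nf))
  have hsupp (q) (x) (hx : x ∉ closedBall c (5 * r)) : Φ q x = x := by
    simp [hΦV, thickenedIndicator_zero hr' _ fun h => hx (hthick h)]
  obtain ⟨Ψ, hΨ, hΨΦ⟩ :=
    exists_compactlySupportedFamily_chartConj (isCompact_closedBall c (5 * r)) hball hΦ hsupp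
  refine ⟨Ψ, hΨ, fun a b => ?_, fun a => Homeomorph.ext fun x => ?_⟩
  · rw [hΨΦ, chartConj_of_mem a.2.1, hΦV, thickenedIndicator_one hr' (ball c r) a.2.2]
    simp [V, e.left_inv b.2.1]
  · rw [hΨΦ]
    exact chartConj_of_apply_eq (by simp [hΦV, V])

theorem exists_mem_nhds_isPushable [T2Space N] (E : Type*) [NormedAddCommGroup E]
    [NormedSpace ℝ E] [ProperSpace E] [ChartedSpace E N] (x : N) : ∃ D ∈ 𝓝 x, IsPushable D := by
  set e := chartAt E x
  obtain ⟨R, hR, hball⟩ := nhds_basis_closedBall.mem_iff.1 (chart_target_mem_nhds E x)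
  refine ⟨e.source ∩ e ⁻¹' ball (e x) (R / 5), ?_,
    isPushable_source_inter_preimage_ball (by positivity) ?_⟩
  · exact inter_mem (chart_source_mem_nhds E x)
      (e.continuousAt (mem_chart_source E x) (ball_mem_nhds _ (by positivity)))
  · rwa [mul_div_cancel₀ R (by norm_num)]

theorem IsPushable.orbitRel_of_eqOn_compl {D : Set N} (hD : IsPushable D) {J C : Set P}
    (hJ : IsOpen J) (hC : IsClosed C) (hCJ : C ⊆ J) {α β : P → N} (hα : Continuous α)
    (hβ : Continuous β) (hαJ : MapsTo α J D) (hβJ : MapsTo β J D) (hαβ : EqOn α β Cᶜ) :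
    compactlySupportedOrbitRel P N α β := by
  obtain ⟨Φ, hΦ, hpush, hdiag⟩ := hD
  let γ (p : J) : D × D := (⟨α p, hαJ p.2⟩, ⟨β p, hβJ p.2⟩)
  have hγ : Continuous γ := by fun_prop
  have hγ_compl (p : J) (hp : (p : P) ∉ C) : Φ (γ p) = 1 := by
    have hdiag_p : (γ p).2 = (γ p).1 := Subtype.ext (hαβ hp).symm
    rw [← hdiag (γ p).1, ← Prod.mk.eta (p := γ p), hdiag_p]
  obtain ⟨Ψ, hΨ, hΨJ, hΨC⟩ := exists_compactlySupportedFamily_extending hJ hC hCJ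
    (comp_mem_compactlySupportedFamilies hΦ hγ) hγ_compl
  refine ⟨Ψ, hΨ, fun p => ?_⟩
  by_cases hp : p ∈ C
  · rw [hΨJ ⟨p, hCJ hp⟩]
    exact hpush _ _
  · rw [hΨC p hp, Homeomorph.one_apply, hαβ hp]

end Pushable

section HomotopyLifting

variable {P N : Type*} [TopologicalSpace P] [TopologicalSpace N]

theorem orbitRel_of_finite_open_cover [NormalSpace P] {ι : Type*} [Finite ι] {J : ι → Set P}
    (hJ : ∀ i, IsOpen (J i)) (hcover : ⋃ i, J i = univ) {D : ι → Set N}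
    (hD : ∀ i, IsPushable (D i)) (h : C(ℝ × P, N)) {a b : ℝ}
    (hJD : ∀ i, MapsTo h ([[a, b]] ×ˢ J i) (D i)) :
    compactlySupportedOrbitRel P N (fun p => h (a, p)) (fun p => h (b, p)) := by
  classical
  have := Fintype.ofFinite ι
  obtain ⟨μ, hμ⟩ := PartitionOfUnity.exists_isSubordinate_of_locallyFinite isClosed_univ J hJ
    (locallyFinite_of_finite J) hcover.ge
  have hsum (p : P) : ∑ i, μ i p = 1 := by
    rw [← finsum_eq_sum_of_fintype, μ.sum_eq_one (mem_univ p)]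
  -- Advance the time parameter from `a` to `b` by the weight of one `J i` after the other.
  let time (s : Finset ι) (p : P) : ℝ := AffineMap.lineMap a b (∑ i ∈ s, μ i p)
  have htime_mem (s : Finset ι) (p : P) : time s p ∈ [[a, b]] := by
    rw [← segment_eq_uIcc, segment_eq_image_lineMap]
    refine mem_image_of_mem _ ⟨Finset.sum_nonneg fun i _ => μ.nonneg i p, ?_⟩
    exact (Finset.sum_le_sum_of_subset_of_nonneg (Finset.subset_univ s) fun i _ _ =>
      μ.nonneg i p).trans_eq (hsum p)
  let k (s : Finset ι) (p : P) : N := h (time s p, p)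
  have hk (s : Finset ι) : Continuous (k s) := by fun_prop
  have hkD (s : Finset ι) (i : ι) : MapsTo (k s) (J i) (D i) := fun p hp =>
    hJD i ⟨htime_mem s p, hp⟩
  have hkμ (s : Finset ι) (i : ι) (hi : i ∉ s) : EqOn (k s) (k (insert i s)) (tsupport (μ i))ᶜ :=
    fun p hp => by
      simp [k, time, Finset.sum_insert hi, image_eq_zero_of_notMem_tsupport hp]
  have horbit (s : Finset ι) : compactlySupportedOrbitRel P N (k ∅) (k s) := by
    induction s using Finset.induction_on with
    | empty => exact Setoid.refl' _ _
    | insert i s hi ih =>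
      exact Setoid.trans' _ ih ((hD i).orbitRel_of_eqOn_compl (hJ i) (isClosed_tsupport _) (hμ i)
        (hk s) (hk _) (hkD s i) (hkD _ i) (hkμ s i hi))
  simpa [k, time, hsum] using horbit Finset.univ

variable [CompactSpace P] [T2Space P]

theorem eventually_orbitRel (hN : ∀ x : N, ∃ D ∈ 𝓝 x, IsPushable D) (h : C(ℝ × P, N)) (a : ℝ) :
    ∀ᶠ b in 𝓝 a, compactlySupportedOrbitRel P N (fun p => h (a, p)) (fun p => h (b, p)) := by
  have hlocal (p : P) : ∃ D, IsPushable D ∧ ∃ ε > 0, ∃ J, IsOpen J ∧ p ∈ J ∧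
      MapsTo h (ball a ε ×ˢ J) D := by
    obtain ⟨D, hDp, hD⟩ := hN (h (a, p))
    obtain ⟨⟨ε, J⟩, ⟨hε, hpJ, hJ⟩, hsub⟩ :=
      (nhds_basis_ball.prod_nhds (nhds_basis_opens p)).mem_iff.1 (h.continuous.continuousAt hDp)
    exact ⟨D, hD, ε, hε, J, hJ, hpJ, hsub⟩
  choose D hD ε hε J hJ hpJ hJD using hlocal
  obtain ⟨t, ht⟩ := isCompact_univ.elim_finite_subcover J hJ fun p _ => mem_iUnion.2 ⟨p, hpJ p⟩
  have hclose : ∀ᶠ b in 𝓝 a, ∀ i : t, b ∈ ball a (ε i) :=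
    eventually_all.2 fun i => ball_mem_nhds a (hε i)
  filter_upwards [hclose] with b hb
  refine orbitRel_of_finite_open_cover (fun i : t => hJ i) ?_ (fun i => hD i) h fun i => ?_
  · simpa [iUnion_subtype, univ_subset_iff] using ht
  · have hab : [[a, b]] ⊆ ball a (ε i) := by
      rw [← segment_eq_uIcc]
      exact (convex_ball a (ε i)).segment_subset (mem_ball_self (hε i)) (hb i)
    exact (hJD i).mono_left (prod_mono hab Subset.rfl)

theorem orbitRel_of_homotopy (hN : ∀ x : N, ∃ D ∈ 𝓝 x, IsPushable D) (h : C(ℝ × P, N))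
    (a b : ℝ) : compactlySupportedOrbitRel P N (fun p => h (a, p)) (fun p => h (b, p)) := by
  let orbit (r : ℝ) : Quotient (compactlySupportedOrbitRel P N) := ⟦fun p => h (r, p)⟧
  have horbit : IsLocallyConstant orbit := (IsLocallyConstant.iff_eventually_eq orbit).2 fun r =>
    (eventually_orbitRel hN h r).mono fun _ hr => (Quotient.sound hr).symm
  exact Quotient.exact (horbit.apply_eq_of_preconnectedSpace a b)

theorem exists_compactlySupportedFamily_lifting (hN : ∀ x : N, ∃ D ∈ 𝓝 x, IsPushable D)
    (φ : C(unitInterval × P, N)) :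
    ∃ Φ ∈ compactlySupportedFamilies (unitInterval × P) N,
      (∀ p, Φ (0, p) = 1) ∧ ∀ s p, Φ (s, p) (φ (0, p)) = φ (s, p) := by
  let h : C(ℝ × (unitInterval × P), N) :=
    ⟨fun q => φ (projIcc 0 1 zero_le_one (q.1 * q.2.1), q.2.2), by fun_prop⟩
  obtain ⟨Ψ, hΨ, hΨφ⟩ := orbitRel_of_homotopy hN h 0 1
  have hΨ_apply (s p) : Ψ (s, p) (φ (0, p)) = φ (s, p) := by simpa [h] using hΨφ (s, p)
  let start (q : unitInterval × P) : unitInterval × P := (0, q.2)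
  refine ⟨Ψ * (Ψ ∘ start)⁻¹, mul_mem hΨ
    (inv_mem (comp_mem_compactlySupportedFamilies hΨ (by fun_prop))), fun p => ?_, fun s p => ?_⟩
  · exact mul_inv_cancel (Ψ (0, p))
  · have hstart : (Ψ (0, p)).symm (φ (0, p)) = φ (0, p) :=
      (Ψ (0, p)).symm_apply_eq.2 (hΨ_apply 0 p).symm
    exact (congrArg (Ψ (s, p)) hstart).trans (hΨ_apply s p)

theorem exists_compactlySupportedFamily_lifting_loop [T2Space N]
    (hN : ∀ x : N, ∃ D ∈ 𝓝 x, IsPushable D) (φ : C(unitInterval × unitInterval, N))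
    (hφ : ∀ s, φ (s, 0) = φ (s, 1)) :
    ∃ Φ ∈ compactlySupportedFamilies (unitInterval × unitInterval) N, (∀ t, Φ (0, t) = 1) ∧
      (∀ s t, Φ (s, t) (φ (0, t)) = φ (s, t)) ∧ ∀ s, Φ (s, 0) = Φ (s, 1) := by
  -- Parametrise by the path `s ↦ φ (s, t)` instead of `t`: then `0` and `1` are identified.
  let path : C(unitInterval, C(unitInterval, N)) := (φ.comp .prodSwap).curry
  let T := range path
  have : CompactSpace T := isCompact_iff_compactSpace.1 (isCompact_range path.continuous)
  let τ (t : unitInterval) : T := ⟨path t, mem_range_self t⟩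
  have hτ : Continuous τ := by fun_prop
  have hτ01 : τ 0 = τ 1 := Subtype.ext (ContinuousMap.ext hφ)
  let eval : C(unitInterval × T, N) :=
    ⟨fun q => (q.2 : C(unitInterval, N)) q.1, by fun_prop⟩
  obtain ⟨Φ, hΦ, hΦ0, hΦφ⟩ := exists_compactlySupportedFamily_lifting hN eval
  exact ⟨Φ ∘ Prod.map id τ, comp_mem_compactlySupportedFamilies hΦ (by fun_prop),
    fun t => hΦ0 (τ t), fun s t => hΦφ s (τ t), fun s => congrArg (fun p => Φ (s, p)) hτ01⟩

end HomotopyLifting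

theorem isotopy_fixing_contractile_point_general {E N : Type*} [NormedAddCommGroup E]
    [NormedSpace ℝ E] [FiniteDimensional ℝ E] [TopologicalSpace N] [T2Space N] [ChartedSpace E N]
    {I : unitInterval → N ≃ₜ N} (hI : I ∈ continuousFamilies unitInterval N) {y : N}
    (hcontr : ∃ φ : C(unitInterval × unitInterval, N),
      (∀ t, φ (0, t) = I t y) ∧ (∃ c, ∀ t, φ (1, t) = c) ∧ ∀ s, φ (s, 0) = φ (s, 1)) :
    ∃ H ∈ continuousFamilies (unitInterval × unitInterval) N,
      (∀ t, H (0, t) = I t) ∧ (∀ s, H (s, 0) = I 0) ∧ (∀ s, H (s, 1) = I 1) ∧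
      (∀ t, H (1, t) y = I 0 y) ∧
      ∃ K, IsCompact K ∧ ∀ s t, ∀ z ∉ K, H (s, t) z = I t z := by
  obtain ⟨φ, hφ0, ⟨c, hφ1⟩, hloop⟩ := hcontr
  have : ProperSpace E := FiniteDimensional.proper_real E
  obtain ⟨Φ, hΦ, hΦ0, hΦφ, hΦ01⟩ :=
    exists_compactlySupportedFamily_lifting_loop (exists_mem_nhds_isPushable E) φ hloop
  let base (q : unitInterval × unitInterval) : unitInterval × unitInterval := (q.1, 0)
  obtain ⟨hΨ, K, hK, hΨK⟩ : (Φ ∘ base)⁻¹ * Φ ∈ compactlySupportedFamilies _ N :=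
    mul_mem (inv_mem (comp_mem_compactlySupportedFamilies hΦ (by fun_prop))) hΦ
  refine ⟨fun q => (Φ (q.1, 0))⁻¹ * Φ q * I q.2,
    mul_mem hΨ (comp_mem_continuousFamilies hI continuous_snd), fun t => ?_, fun s => ?_,
    fun s => ?_, fun t => ?_, {z | ∃ t, I t z ∈ K}, isCompact_setOf_exists_apply_mem hI hK,
    fun s t z hz => hΨK (s, t) (I t z) fun hmem => hz ⟨t, hmem⟩⟩
  · simp [hΦ0]
  · simp
  · simp [← hΦ01]
  · have hΦc : Φ (1, t) (I t y) = Φ (1, 0) (I 0 y) := by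
      rw [← hφ0, ← hφ0, hΦφ, hΦφ, hφ1, hφ1]
    exact (Φ (1, 0)).symm_apply_eq.2 hΦc

/-- If the trajectory loop I(y) of a fixed point y ∈ Fix(F) \ X is
null-homotopic in N_X = M \ X, then the isotopy I can be modified, by a homotopy
relative to the complement of some compact subset of N_X, into an isotopy I' from
the identity to F|_{N_X} that fixes y at all times. -/
theorem isotopy_fixing_contractile_point
    {M : Type*} [TopologicalSpace M]
    [T2Space M] [SecondCountableTopology M] [ConnectedSpace M]
    [ChartedSpace (EuclideanSpace ℝ (Fin 2)) M]
    (F : M ≃ₜ M) (X : Set M) (hXclosed : IsClosed X)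
    (hXfix : ∀ x ∈ X, F x = x)
    -- the isotopy I = (F_t) on N_X = M \ X, from the identity to F|_{N_X}
    (I : unitInterval → ↥Xᶜ ≃ₜ ↥Xᶜ)
    (hIcont : Continuous (fun p : unitInterval × ↥Xᶜ => I p.1 p.2))
    (hIcont' : Continuous (fun p : unitInterval × ↥Xᶜ => (I p.1).symm p.2))
    (hI0 : I 0 = Homeomorph.refl ↥Xᶜ)
    (hI1 : ∀ z : ↥Xᶜ, ((I 1 z : M)) = F (z : M))
    -- the fixed point y ∈ Fix(F) \ X
    (y : ↥Xᶜ) (hy : F (y : M) = (y : M))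
    -- the trajectory loop I(y) is null-homotopic in N_X
    (hcontr : ∃ H : C(unitInterval × unitInterval, ↥Xᶜ),
      (∀ t, H (0, t) = I t y) ∧ (∃ c, ∀ t, H (1, t) = c) ∧
      (∀ s, H (s, 0) = H (s, 1))) :
    ∃ I' : unitInterval → ↥Xᶜ ≃ₜ ↥Xᶜ,
      Continuous (fun p : unitInterval × ↥Xᶜ => I' p.1 p.2) ∧
      Continuous (fun p : unitInterval × ↥Xᶜ => (I' p.1).symm p.2) ∧
      I' 0 = Homeomorph.refl ↥Xᶜ ∧
      (∀ z : ↥Xᶜ, ((I' 1 z : M)) = F (z : M)) ∧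
      -- I' fixes y at all times
      (∀ t, I' t y = y) ∧
      -- I' is homotopic to I relative to the complement of a compact set K ⊆ N_X
      (∃ K : Set M, K ⊆ Xᶜ ∧ IsCompact K ∧
        ∃ H : unitInterval → unitInterval → ↥Xᶜ ≃ₜ ↥Xᶜ,
          Continuous (fun p : (unitInterval × unitInterval) × ↥Xᶜ => H p.1.1 p.1.2 p.2) ∧
          (∀ t, H 0 t = I t) ∧ (∀ t, H 1 t = I' t) ∧
          (∀ s t, ∀ z : ↥Xᶜ, (z : M) ∉ K → H s t z = I t z)) := by
  let _ : ChartedSpace (EuclideanSpace ℝ (Fin 2)) ↥Xᶜ :=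
    TopologicalSpace.Opens.instChartedSpace ⟨Xᶜ, hXclosed.isOpen_compl⟩
  obtain ⟨H, hH, hH0, hHs0, hHs1, hHy, K, hK, hHK⟩ :=
    isotopy_fixing_contractile_point_general (E := EuclideanSpace ℝ (Fin 2))
      ⟨hIcont, hIcont'⟩ hcontr
  obtain ⟨hI', hI'symm⟩ := comp_mem_continuousFamilies hH (Continuous.prodMk_right 1)
  exact ⟨fun t => H (1, t), hI', hI'symm, (hHs0 1).trans hI0, fun z => by simp only [hHs1, hI1],
    fun t => (hHy t).trans (by rw [hI0]; rfl), Subtype.val '' K, Subtype.coe_image_subset _ K,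
    hK.image continuous_subtype_val, fun s t => H (s, t), hH.1, hH0, fun _ => rfl,
    fun s t z hz => hHK s t z fun hzK => hz (mem_image_of_mem _ hzK)⟩
end
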